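/- Let X be a compact metric space, v₀ > 0, ε₀ > 0, and let (μ_i)_{i ∈ ℕ} be a sequence of finite Borel measures on X with μ_i(X) ≤ v₀ for every i. Then there exists a strictly increasing function φ : ℕ → ℕ such that the set S = { x ∈ X : inf_{r > 0} ( limsup_{i → ∞} μ_{φ(i)}(B(x,r)) ) ≥ ε₀ } is finite and has at most v₀/ε₀ elements, where B(x,r) denotes the open ball of radius r about x. -/

import Mathlib

open MeasureTheory Filter

/-!
Replace the limsup in the definition of mass by a liminf. Liminf masses at distinct points of a
Hausdorff space add up, by superadditivity of liminf on disjoint neighbourhoods, to at most the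
total mass, so at most `v / ε` points have liminf mass at least `ε`. Passing to a subsequence only
increases liminf masses, and a diagonal subsequence turns the limsup mass of a prescribed point into
a liminf mass. Hence, along a subsequence with as many points of liminf mass at least `ε` as
possible, every point of limsup mass at least `ε` is already one of these.
-/

open scoped ENNReal Topology

theorem sum_liminf_le_liminf_sum {α ι : Type*} (s : Finset α) (u : α → ι → ℝ≥0∞)
    (l : Filter ι) :
    ∑ a ∈ s, liminf (u a) l ≤ liminf (fun i ↦ ∑ a ∈ s, u a i) l := by
  simp only [liminf_eq_iSup_iInf, iSup_subtype']
  have directed (S T : {S // S ∈ l}) : ∃ R : {S // S ∈ l}, ∀ a,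
      ⨅ i ∈ S.1, u a i ≤ ⨅ i ∈ R.1, u a i ∧ ⨅ i ∈ T.1, u a i ≤ ⨅ i ∈ R.1, u a i :=
    ⟨⟨S ∩ T, inter_mem S.2 T.2⟩, fun _ ↦
      ⟨biInf_mono fun _ hi ↦ hi.1, biInf_mono fun _ hi ↦ hi.2⟩⟩
  rw [ENNReal.finsetSum_iSup directed]
  exact iSup_mono fun S ↦ le_iInf₂ fun i hi ↦ Finset.sum_le_sum fun a _ ↦ iInf₂_le i hi

section Mass

variable {X ι : Type*} [TopologicalSpace X] [MeasurableSpace X]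

/-- The mass of the point `x` for the family of measures `μ` along the filter `l`: the infimum over
neighbourhoods of `x` of their upper limiting measure. In a metric space the neighbourhoods may be
taken to be balls, see `limsupMass_eq_iInf_ball`. -/
noncomputable def limsupMass (μ : ι → Measure X) (l : Filter ι) (x : X) : ℝ≥0∞ :=
  ⨅ U ∈ 𝓝 x, limsup (fun i ↦ μ i U) l

/-- The variant of `limsupMass` with lower limits. Unlike `limsupMass`, it is superadditive over
distinct points and can only grow along subsequences. -/
noncomputable def liminfMass (μ : ι → Measure X) (l : Filter ι) (x : X) : ℝ≥0∞ :=
  ⨅ U ∈ 𝓝 x, liminf (fun i ↦ μ i U) l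

theorem liminfMass_le_liminfMass_comp {κ : Type*} (μ : ι → Measure X) {l : Filter ι}
    {l' : Filter κ} {ψ : κ → ι} (hψ : Tendsto ψ l' l) (x : X) :
    liminfMass μ l x ≤ liminfMass (μ ∘ ψ) l' x :=
  iInf₂_mono fun _ _ ↦ hψ.liminf_le_liminf_comp

theorem tsum_liminfMass_le [T2Space X] [OpensMeasurableSpace X] (μ : ι → Measure X)
    (l : Filter ι) : ∑' x, liminfMass μ l x ≤ liminf (fun i ↦ μ i Set.univ) l := by
  refine ENNReal.summable.tsum_le_of_sum_le fun F ↦ ?_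
  obtain ⟨U, hU, hdisj⟩ := F.finite_toSet.t2_separation
  calc ∑ x ∈ F, liminfMass μ l x
      ≤ ∑ x ∈ F, liminf (fun i ↦ μ i (U x)) l :=
        Finset.sum_le_sum fun x _ ↦ iInf₂_le (U x) ((hU x).2.mem_nhds (hU x).1)
    _ ≤ liminf (fun i ↦ ∑ x ∈ F, μ i (U x)) l := sum_liminf_le_liminf_sum ..
    _ ≤ liminf (fun i ↦ μ i Set.univ) l := liminf_le_liminf <| .of_forall fun i ↦
        sum_measure_le_measure_univ (fun x _ ↦ (hU x).2.nullMeasurableSet) hdisj.aedisjoint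

theorem finite_and_ncard_le_of_le_liminfMass [T2Space X] [OpensMeasurableSpace X]
    {μ : ι → Measure X} {l : Filter ι} [l.NeBot] {v ε : ℝ≥0∞} (hv : v ≠ ∞) (hε : ε ≠ 0)
    (hμ : ∀ i, μ i Set.univ ≤ v) :
    {x | ε ≤ liminfMass μ l x}.Finite ∧ ({x | ε ≤ liminfMass μ l x}.ncard : ℝ≥0∞) ≤ v / ε := by
  have total_le : ∑' x, liminfMass μ l x ≤ v :=
    (tsum_liminfMass_le μ l).trans <|
      (liminf_le_liminf <| .of_forall hμ).trans_eq (liminf_const v)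
  obtain ⟨hfin, hcard⟩ := ENNReal.finset_card_const_le_le_of_tsum_le hv total_le hε
  exact ⟨hfin, by rwa [Set.ncard_eq_toFinset_card _ hfin]⟩

theorem exists_strictMono_limsupMass_le_liminfMass [FirstCountableTopology X]
    (μ : ℕ → Measure X) (x : X) :
    ∃ ψ : ℕ → ℕ, StrictMono ψ ∧ limsupMass μ atTop x ≤ liminfMass (μ ∘ ψ) atTop x := by
  obtain hm | hm := eq_zero_or_pos (limsupMass μ atTop x)
  · exact ⟨id, strictMono_id, hm.trans_le bot_le⟩
  obtain ⟨c, -, hc, hc_lim⟩ := exists_seq_strictMono_tendsto' hm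
  obtain ⟨U, hU⟩ := (𝓝 x).exists_antitone_basis
  have frequently_lt (n : ℕ) : ∃ᶠ k in atTop, c n < μ k (U n) :=
    frequently_lt_of_lt_limsup (h := (hc n).2.trans_le (iInf₂_le _ (hU.mem n)))
  obtain ⟨ψ, hψ, hlt⟩ := extraction_forall_of_frequently frequently_lt
  refine ⟨ψ, hψ, le_iInf₂ fun V hV ↦ ?_⟩
  rw [← hc_lim.liminf_eq]
  refine liminf_le_liminf ?_
  filter_upwards [hU.eventually_subset hV] with n hn
  exact (hlt n).le.trans (measure_mono hn)

theorem exists_strictMono_forall_le_liminfMass_of_le_limsupMass [T2Space X]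
    [FirstCountableTopology X] [OpensMeasurableSpace X] {μ : ℕ → Measure X} {v ε : ℝ≥0∞}
    (hv : v ≠ ∞) (hε : ε ≠ 0) (hμ : ∀ i, μ i Set.univ ≤ v) :
    ∃ φ : ℕ → ℕ, StrictMono φ ∧
      ∀ x, ε ≤ limsupMass (μ ∘ φ) atTop x → ε ≤ liminfMass (μ ∘ φ) atTop x := by
  let heavy (φ : ℕ → ℕ) : Set X := {x | ε ≤ liminfMass (μ ∘ φ) atTop x}
  have heavy_bound (φ : ℕ → ℕ) : (heavy φ).Finite ∧ ((heavy φ).ncard : ℝ≥0∞) ≤ v / ε :=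
    finite_and_ncard_le_of_le_liminfMass hv hε fun i ↦ hμ (φ i)
  obtain ⟨N, hN⟩ := ENNReal.exists_nat_gt (ENNReal.div_ne_top hv hε)
  have ncard_finite : ((fun φ ↦ (heavy φ).ncard) '' {φ | StrictMono φ}).Finite := by
    refine (Set.finite_Iio N).subset ?_
    rintro _ ⟨φ, -, rfl⟩
    exact Nat.cast_lt.1 ((heavy_bound φ).2.trans_lt hN)
  obtain ⟨φ, hφ : StrictMono φ, hmax⟩ :=
    Set.Finite.exists_maximalFor' _ _ ncard_finite ⟨id, strictMono_id⟩
  refine ⟨φ, hφ, fun x hx ↦ ?_⟩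
  obtain ⟨ψ, hψ, hxψ⟩ := exists_strictMono_limsupMass_le_liminfMass (μ ∘ φ) x
  have heavy_subset : heavy φ ⊆ heavy (φ ∘ ψ) := fun y hy ↦
    le_trans hy (liminfMass_le_liminfMass_comp (μ ∘ φ) hψ.tendsto_atTop y)
  have ncard_le : (heavy (φ ∘ ψ)).ncard ≤ (heavy φ).ncard :=
    hmax (hφ.comp hψ) (Set.ncard_le_ncard heavy_subset (heavy_bound _).1)
  have heavy_eq : heavy φ = heavy (φ ∘ ψ) :=
    Set.eq_of_subset_of_ncard_le heavy_subset ncard_le (heavy_bound _).1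
  exact heavy_eq.ge (hx.trans hxψ)

theorem stmt_11_general [T2Space X] [FirstCountableTopology X] [OpensMeasurableSpace X]
    {v ε : ℝ≥0∞} (hv : v ≠ ∞) (hε : ε ≠ 0) {μ : ℕ → Measure X} (hμ : ∀ i, μ i Set.univ ≤ v) :
    ∃ φ : ℕ → ℕ, StrictMono φ ∧ {x | ε ≤ limsupMass (μ ∘ φ) atTop x}.Finite ∧
      ({x | ε ≤ limsupMass (μ ∘ φ) atTop x}.ncard : ℝ≥0∞) ≤ v / ε := by
  obtain ⟨φ, hφ, hsub⟩ := exists_strictMono_forall_le_liminfMass_of_le_limsupMass hv hε hμ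
  obtain ⟨hfin, hcard⟩ : _ ∧ ({x | ε ≤ liminfMass (μ ∘ φ) atTop x}.ncard : ℝ≥0∞) ≤ v / ε :=
    finite_and_ncard_le_of_le_liminfMass hv hε fun i ↦ hμ (φ i)
  exact ⟨φ, hφ, hfin.subset hsub,
    (Nat.cast_le.2 (Set.ncard_le_ncard hsub hfin)).trans hcard⟩

end Mass

theorem limsupMass_eq_iInf_ball {X ι : Type*} [PseudoMetricSpace X] [MeasurableSpace X]
    (μ : ι → Measure X) (l : Filter ι) (x : X) :
    limsupMass μ l x = ⨅ (r : ℝ) (_ : 0 < r), limsup (fun i ↦ μ i (Metric.ball x r)) l :=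
  Metric.nhds_basis_ball.biInf_mem fun _ _ hUV ↦
    limsup_le_limsup <| .of_forall fun _ ↦ measure_mono hUV

theorem stmt_11 {X : Type*} [MetricSpace X] [CompactSpace X]
    [MeasurableSpace X] [BorelSpace X]
    (v₀ ε₀ : ℝ) (hv₀ : 0 < v₀) (hε₀ : 0 < ε₀)
    (μ : ℕ → Measure X) (hfin : ∀ i, IsFiniteMeasure (μ i))
    (hμ : ∀ i, μ i Set.univ ≤ ENNReal.ofReal v₀) :
    ∃ φ : ℕ → ℕ, StrictMono φ ∧
      {x : X | ENNReal.ofReal ε₀ ≤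
        ⨅ (r : ℝ) (_ : 0 < r), limsup (fun i => μ (φ i) (Metric.ball x r)) atTop}.Finite ∧
      (({x : X | ENNReal.ofReal ε₀ ≤
        ⨅ (r : ℝ) (_ : 0 < r), limsup (fun i => μ (φ i) (Metric.ball x r)) atTop}.ncard : ℝ)
        ≤ v₀ / ε₀) := by
  simpa only [limsupMass_eq_iInf_ball, Function.comp_apply, ← ENNReal.ofReal_div_of_pos hε₀,
    ← ENNReal.ofReal_natCast, ENNReal.ofReal_le_ofReal_iff (div_pos hv₀ hε₀).le] using
    stmt_11_general ENNReal.ofReal_ne_top (ENNReal.ofReal_pos.2 hε₀).ne' hμ
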